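/- Fix a positive integer $m$, $0<p,q<\infty$, and $1<\alpha,\beta<\infty$. For each positive integer $n$ let $p_{1,n}(\mathbf{z})=\frac{1}{\sqrt{n}}\sum_{i=1}^n z_i$. Then $\lim_{n\to\infty}\frac{\|p_{1,n}^m\|_{A_\beta^q(\mathbb{D}^n)}}{\|p_{1,n}^m\|_{A_\alpha^p(\mathbb{D}^n)}}=\left(\sqrt{\frac{\alpha}{\beta}}\right)^m\frac{\Gamma\left(\frac{qm}{2}+1\right)^{1/q}}{\Gamma\left(\frac{pm}{2}+1\right)^{1/p}}$. -/

import Mathlib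

open MeasureTheory Metric Filter

/-- The weighted Bergman measure `dA_α(z) = (α-1)(1-|z|²)^(α-2) dA(z)` on the unit disk,
where `dA = dx dy / π` is the normalized area measure. -/
noncomputable def bergmanMeasure (α : ℝ) : Measure ℂ :=
  ((volume : Measure ℂ).restrict (ball (0 : ℂ) 1)).withDensity
    fun z => ENNReal.ofReal ((α - 1) * (1 - ‖z‖ ^ 2) ^ (α - 2) / Real.pi)

/-- The product Bergman measure `dA_α(z₁) ⋯ dA_α(zₙ)` on the polydisc. -/
noncomputable def bergmanMeasurePi (n : ℕ) (α : ℝ) : Measure (Fin n → ℂ) :=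
  Measure.pi fun _ => bergmanMeasure α

/-!
The Bergman measure `dA_α` is a rotation invariant probability measure on the disk with
`∫ ‖z‖² dA_α = 1 / α`, so by the central limit theorem `n^{-1/2} ∑ᵢ zᵢ` converges in distribution
to the centred isotropic Gaussian on `ℂ` with second moment `1 / α`, whose `r`-th absolute moment
is `α^{-r/2} Γ(r/2 + 1)`. Since `dA_α` has bounded support, Hoeffding's lemma makes
`n^{-1/2} ∑ᵢ zᵢ` subgaussian uniformly in `n`. All its moments are therefore bounded, and
convergence in distribution upgrades to convergence of moments.
-/

open ProbabilityTheory
open scoped Topology ENNReal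

section ConvergenceOfMoments

lemma abs_sub_max_neg_min_le {M : ℝ} (hM : 0 < M) (x : ℝ) :
    |x - max (-M) (min M x)| ≤ x ^ 2 / M := by
  rw [le_div_iff₀ hM]
  rcases le_total M x with h | h
  · rw [min_eq_left h, max_eq_right (by linarith), abs_of_nonneg (by linarith)]
    nlinarith
  rcases le_total (-M) x with h' | h'
  · rw [min_eq_right h, max_eq_right h', sub_self, abs_zero, zero_mul]
    positivity
  · rw [min_eq_right h, max_eq_left h', abs_of_nonpos (by linarith)]
    nlinarith

variable {Ω : Type*} {mΩ : MeasurableSpace Ω} {μ : Measure Ω} {X : Ω → ℝ}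

lemma abs_integral_sub_integral_max_neg_min_le [IsFiniteMeasure μ] (hX : MemLp X 2 μ) {M : ℝ}
    (hM : 0 < M) :
    |∫ ω, X ω ∂μ - ∫ ω, max (-M) (min M (X ω)) ∂μ| ≤ (∫ ω, X ω ^ 2 ∂μ) / M := by
  have hX₁ : Integrable X μ := hX.integrable one_le_two
  have htrunc : Integrable (fun ω ↦ max (-M) (min M (X ω))) μ :=
    (integrable_const (-M)).sup ((integrable_const M).inf hX₁)
  rw [← integral_sub hX₁ htrunc, ← integral_div]
  refine abs_integral_le_integral_abs.trans <|
    integral_mono (hX₁.sub htrunc).abs (hX.integrable_sq.div_const M) fun ω ↦ ?_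
  exact abs_sub_max_neg_min_le hM (X ω)

lemma tendsto_integral_max_neg_min (hX : Integrable X μ) :
    Tendsto (fun M : ℝ ↦ ∫ ω, max (-M) (min M (X ω)) ∂μ) atTop (𝓝 (∫ ω, X ω ∂μ)) := by
  refine tendsto_integral_filter_of_dominated_convergence (fun ω ↦ |X ω|) ?_ ?_ hX.abs ?_
  · exact .of_forall fun M ↦ aestronglyMeasurable_const.sup
      (aestronglyMeasurable_const.inf hX.aestronglyMeasurable)
  · filter_upwards [eventually_ge_atTop 0] with M hM
    refine .of_forall fun ω ↦ abs_le.2 ⟨?_, ?_⟩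
    · exact le_max_of_le_right (le_min (by linarith [abs_nonneg (X ω)]) (neg_abs_le _))
    · exact max_le (by linarith [abs_nonneg (X ω)]) ((min_le_right _ _).trans (le_abs_self _))
  · refine .of_forall fun ω ↦ tendsto_const_nhds.congr' ?_
    filter_upwards [eventually_ge_atTop |X ω|] with M hM
    rw [min_eq_right ((le_abs_self _).trans hM), max_eq_right (abs_le.1 hM).1]

variable {ι : Type*} {l : Filter ι} {Ωs : ι → Type*} {mΩs : ∀ i, MeasurableSpace (Ωs i)}
  {μs : ∀ i, Measure (Ωs i)} [∀ i, IsProbabilityMeasure (μs i)] [IsProbabilityMeasure μ]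

open scoped BoundedContinuousFunction in
lemma tendsto_integral_comp_of_tendstoInDistribution {E : Type*} [TopologicalSpace E]
    [MeasurableSpace E] [OpensMeasurableSpace E] {X : ∀ i, Ωs i → E} {Z : Ω → E}
    (h : TendstoInDistribution X l Z μs μ) (f : E →ᵇ ℝ) :
    Tendsto (fun i ↦ ∫ ω, f (X i ω) ∂μs i) l (𝓝 (∫ ω, f (Z ω) ∂μ)) := by
  have hf := ProbabilityMeasure.tendsto_iff_forall_integral_tendsto.1 h.tendsto f
  simp only [ProbabilityMeasure.coe_mk] at hf
  rw [integral_map h.aemeasurable_limit f.continuous.measurable.aestronglyMeasurable] at hf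
  exact hf.congr fun i ↦
    integral_map (h.forall_aemeasurable i) f.continuous.measurable.aestronglyMeasurable

lemma tendsto_integral_max_neg_min_of_tendstoInDistribution {X : ∀ i, Ωs i → ℝ} {Z : Ω → ℝ}
    (h : TendstoInDistribution X l Z μs μ) {M : ℝ} (hM : 0 ≤ M) :
    Tendsto (fun i ↦ ∫ ω, max (-M) (min M (X i ω)) ∂μs i) l
      (𝓝 (∫ ω, max (-M) (min M (Z ω)) ∂μ)) :=
  tendsto_integral_comp_of_tendstoInDistribution h <|
    .ofNormedAddCommGroup (fun x ↦ max (-M) (min M x)) (by fun_prop) M fun _ ↦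
      abs_le.2 ⟨le_max_left _ _, max_le (by linarith) (min_le_left _ _)⟩

theorem tendsto_integral_of_tendstoInDistribution_of_integral_sq_le {X : ∀ i, Ωs i → ℝ}
    {Z : Ω → ℝ} (h : TendstoInDistribution X l Z μs μ) (hX : ∀ᶠ i in l, MemLp (X i) 2 (μs i))
    {C : ℝ} (hC : ∀ᶠ i in l, ∫ ω, X i ω ^ 2 ∂μs i ≤ C) (hZ : Integrable Z μ) :
    Tendsto (fun i ↦ ∫ ω, X i ω ∂μs i) l (𝓝 (∫ ω, Z ω ∂μ)) := by
  have hunif : TendstoUniformlyOnFilter (fun (M : ℝ) i ↦ ∫ ω, max (-M) (min M (X i ω)) ∂μs i)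
      (fun i ↦ ∫ ω, X i ω ∂μs i) atTop l := by
    rw [Metric.tendstoUniformlyOnFilter_iff]
    intro ε hε
    have hCM : ∀ᶠ M : ℝ in atTop, C / M < ε :=
      (tendsto_const_nhds.div_atTop tendsto_id).eventually_lt_const hε
    filter_upwards [(hCM.and (eventually_gt_atTop 0)).prod_mk (hX.and hC)]
      with ⟨M, i⟩ ⟨⟨hMε, hM⟩, hXi, hCi⟩
    calc dist (∫ ω, X i ω ∂μs i) (∫ ω, max (-M) (min M (X i ω)) ∂μs i)
        ≤ (∫ ω, X i ω ^ 2 ∂μs i) / M := abs_integral_sub_integral_max_neg_min_le hXi hM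
      _ ≤ C / M := by gcongr
      _ < ε := hMε
  refine hunif.tendsto_of_eventually_tendsto ?_ (tendsto_integral_max_neg_min hZ)
  filter_upwards [eventually_ge_atTop 0] with M hM
  exact tendsto_integral_max_neg_min_of_tendstoInDistribution h hM

end ConvergenceOfMoments

section GaussianMoments
open Module Real

lemma integral_norm_rpow_mul_exp_neg_mul_sq_norm {E : Type*} [NormedAddCommGroup E]
    [NormedSpace ℝ E] [FiniteDimensional ℝ E] [Nontrivial E] [MeasurableSpace E] [BorelSpace E]
    (μ : Measure E) [μ.IsAddHaarMeasure] {b r : ℝ} (hb : 0 < b)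
    (hr : -finrank ℝ E < r) :
    ∫ x, ‖x‖ ^ r * exp (-b * ‖x‖ ^ 2) ∂μ =
      finrank ℝ E * μ.real (ball 0 1) / 2 * b ^ (-((finrank ℝ E + r) / 2)) *
        Gamma ((finrank ℝ E + r) / 2) := by
  have hd : 0 < finrank ℝ E := finrank_pos
  have hradial : ∫ y in Set.Ioi (0 : ℝ), y ^ (finrank ℝ E - 1) • (y ^ r * exp (-b * y ^ 2)) =
      ∫ y in Set.Ioi (0 : ℝ), y ^ (finrank ℝ E - 1 + r) * exp (-b * y ^ (2 : ℝ)) := by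
    refine setIntegral_congr_fun measurableSet_Ioi fun y (hy : 0 < y) ↦ ?_
    simp only [smul_eq_mul, rpow_add hy, rpow_two]
    rw [← mul_assoc, ← Nat.cast_pred hd, rpow_natCast]
  rw [integral_fun_norm_addHaar μ fun y ↦ y ^ r * exp (-b * y ^ 2), hradial,
    integral_rpow_mul_exp_neg_mul_rpow two_pos (by linarith) hb, nsmul_eq_mul, smul_eq_mul]
  ring_nf

variable (E : Type*) [NormedAddCommGroup E] [InnerProductSpace ℝ E] [FiniteDimensional ℝ E]
  [MeasurableSpace E] [BorelSpace E]

lemma integrable_exp_neg_mul_sq_norm {b : ℝ} (hb : 0 < b) :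
    Integrable fun x : E ↦ exp (-b * ‖x‖ ^ 2) := by
  refine .of_integral_ne_zero ?_
  rw [GaussianFourier.integral_rexp_neg_mul_sq_norm hb]
  positivity

lemma stdGaussian_eq_withDensity :
    stdGaussian E = (volume : Measure E).withDensity fun x ↦
      ENNReal.ofReal ((2 * π) ^ (-(finrank ℝ E / 2 : ℝ)) * exp (-2⁻¹ * ‖x‖ ^ 2)) := by
  have := isFiniteMeasure_withDensity_ofReal
    ((integrable_exp_neg_mul_sq_norm E (inv_pos.2 two_pos)).const_mul
      ((2 * π) ^ (-(finrank ℝ E / 2 : ℝ)))).2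
  refine Measure.ext_of_charFun <| funext fun t ↦ ?_
  have hfourier := GaussianFourier.integral_cexp_neg_mul_sq_norm_add (V := E) (b := 2⁻¹)
    (by norm_num) Complex.I t
  have hconst : (((2 * π) ^ (-(finrank ℝ E / 2 : ℝ)) : ℝ) : ℂ) *
      (π / 2⁻¹ : ℂ) ^ (finrank ℝ E / 2 : ℂ) = 1 := by
    have hpow : (π / 2⁻¹ : ℂ) ^ (finrank ℝ E / 2 : ℂ) = ((2 * π) ^ (finrank ℝ E / 2 : ℝ) : ℝ) := by
      rw [Complex.ofReal_cpow two_pi_pos.le, div_inv_eq_mul, mul_comm]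
      push_cast
      rfl
    rw [hpow, ← Complex.ofReal_mul, ← rpow_add two_pi_pos, neg_add_cancel, rpow_zero,
      Complex.ofReal_one]
  rw [charFun_stdGaussian, charFun_apply,
    integral_withDensity_eq_integral_toReal_smul (by fun_prop) (by simp)]
  calc Complex.exp (-‖t‖ ^ 2 / 2)
      = (((2 * π) ^ (-(finrank ℝ E / 2 : ℝ)) : ℝ) : ℂ) * ∫ x : E, Complex.exp
          (-2⁻¹ * ‖x‖ ^ 2 + Complex.I * inner ℝ t x) := by
        rw [hfourier, ← mul_assoc, hconst, one_mul, Complex.I_sq]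
        congr 1
        ring
    _ = _ := by
        rw [← integral_const_mul]
        refine integral_congr_ae (.of_forall fun x ↦ ?_)
        beta_reduce
        rw [ENNReal.toReal_ofReal (by positivity), real_inner_comm x t, Complex.exp_add,
          Complex.real_smul, Complex.ofReal_mul, mul_comm Complex.I]
        push_cast
        ring

variable {E}

lemma integral_norm_rpow_stdGaussian [Nontrivial E] {r : ℝ} (hr : -finrank ℝ E < r) :
    ∫ x, ‖x‖ ^ r ∂stdGaussian E =
      2 ^ (r / 2) * Gamma ((finrank ℝ E + r) / 2) / Gamma (finrank ℝ E / 2) := by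
  set K : ℝ := (2 * π) ^ (-(finrank ℝ E / 2 : ℝ)) *
    (finrank ℝ E * volume.real (ball (0 : E) 1) / 2 * 2 ^ (finrank ℝ E / 2 : ℝ)) with hK
  have hmoment {r : ℝ} (hr : -finrank ℝ E < r) : ∫ x, ‖x‖ ^ r ∂stdGaussian E =
      K * (2 ^ (r / 2) * Gamma ((finrank ℝ E + r) / 2)) := by
    rw [stdGaussian_eq_withDensity,
      integral_withDensity_eq_integral_toReal_smul (by fun_prop) (by simp)]
    calc ∫ x : E, (ENNReal.ofReal ((2 * π) ^ (-(finrank ℝ E / 2 : ℝ)) *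
          exp (-2⁻¹ * ‖x‖ ^ 2))).toReal • ‖x‖ ^ r
        = ∫ x : E, (2 * π) ^ (-(finrank ℝ E / 2 : ℝ)) * (‖x‖ ^ r * exp (-2⁻¹ * ‖x‖ ^ 2)) := by
          refine integral_congr_ae (.of_forall fun x ↦ ?_)
          beta_reduce
          rw [ENNReal.toReal_ofReal (by positivity), smul_eq_mul]
          ring
      _ = K * (2 ^ (r / 2) * Gamma ((finrank ℝ E + r) / 2)) := by
          rw [integral_const_mul,
            integral_norm_rpow_mul_exp_neg_mul_sq_norm volume (by norm_num) hr, inv_rpow two_pos.le,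
            ← rpow_neg two_pos.le, neg_neg, add_div, rpow_add two_pos, hK]
          ring
  have hone : 1 = K * Gamma (finrank ℝ E / 2) := by
    simpa using hmoment (neg_lt_zero.2 (Nat.cast_pos.2 finrank_pos))
  have hΓ : Gamma (finrank ℝ E / 2 : ℝ) ≠ 0 := right_ne_zero_of_mul (hone ▸ one_ne_zero)
  rw [hmoment hr, eq_div_iff hΓ]
  linear_combination (-(2 ^ (r / 2) * Gamma ((finrank ℝ E + r) / 2))) * hone

lemma integrable_norm_rpow_stdGaussian {r : ℝ} (hr : 0 < r) :
    Integrable (fun x ↦ ‖x‖ ^ r) (stdGaussian E) := by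
  have h := (IsGaussian.memLp_id (stdGaussian E) (ENNReal.ofReal r) (by simp)).integrable_norm_rpow
    (by simpa using hr) (by simp)
  simpa [ENNReal.toReal_ofReal hr.le] using h

end GaussianMoments

section RotationInvariance

lemma measurePreserving_withDensity_comp {α β : Type*} {mα : MeasurableSpace α}
    {mβ : MeasurableSpace β} {μ : Measure α} {ν : Measure β} {f : α → β}
    (hf : MeasurePreserving f μ ν) {g : β → ℝ≥0∞} (hg : Measurable g) :
    MeasurePreserving f (μ.withDensity (g ∘ f)) (ν.withDensity g) := by
  refine ⟨hf.measurable, Measure.ext fun s hs ↦ ?_⟩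
  rw [Measure.map_apply hf.measurable hs, withDensity_apply _ (hf.measurable hs),
    withDensity_apply _ hs, ← hf.setLIntegral_comp_preimage hs hg]
  rfl

variable {E : Type*} [NormedAddCommGroup E] [InnerProductSpace ℝ E] [MeasurableSpace E]

/-- A measure on an inner product space is *rotation invariant* if every linear isometry of the
space preserves it; reflections are included. -/
def IsRotationInvariant (μ : Measure E) : Prop :=
  ∀ e : E ≃ₗᵢ[ℝ] E, MeasurePreserving e μ μ

lemma isRotationInvariant_volume [FiniteDimensional ℝ E] [BorelSpace E] :
    IsRotationInvariant (volume : Measure E) :=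
  fun e ↦ e.measurePreserving

namespace IsRotationInvariant

variable [BorelSpace E] {μ : Measure E}

lemma restrict_ball (hμ : IsRotationInvariant μ) (r : ℝ) :
    IsRotationInvariant (μ.restrict (ball 0 r)) := fun e ↦ by
  simpa only [e.preimage_ball, map_zero] using
    (hμ e).restrict_preimage (measurableSet_ball (x := (0 : E)))

lemma withDensity_norm (hμ : IsRotationInvariant μ) {f : ℝ → ℝ≥0∞} (hf : Measurable f) :
    IsRotationInvariant (μ.withDensity fun x ↦ f ‖x‖) := fun e ↦ by
  simpa only [Function.comp_def, e.norm_map] using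
    measurePreserving_withDensity_comp (hμ e) (hf.comp measurable_norm)

lemma integral_comp (hμ : IsRotationInvariant μ) {F : Type*} [NormedAddCommGroup F]
    [NormedSpace ℝ F] (e : E ≃ₗᵢ[ℝ] E) (f : E → F) : ∫ x, f (e x) ∂μ = ∫ x, f x ∂μ :=
  (hμ e).integral_comp e.toHomeomorph.measurableEmbedding f

lemma integral_inner_eq_zero (hμ : IsRotationInvariant μ) (t : E) : ∫ x, inner ℝ x t ∂μ = 0 := by
  have h := hμ.integral_comp (LinearIsometryEquiv.neg ℝ) fun x ↦ inner ℝ x t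
  simp only [LinearIsometryEquiv.coe_neg, inner_neg_left, integral_neg] at h
  linarith

lemma integral_sq_inner_congr_norm (hμ : IsRotationInvariant μ) {v w : E} (h : ‖v‖ = ‖w‖) :
    ∫ x, inner ℝ x v ^ 2 ∂μ = ∫ x, inner ℝ x w ^ 2 ∂μ := by
  have hR (x : E) : inner ℝ ((ℝ ∙ (v - w))ᗮ.reflection x) w = inner ℝ x v := by
    have hinner := (ℝ ∙ (v - w))ᗮ.reflection.inner_map_map x v
    rwa [Submodule.reflection_sub h] at hinner
  simpa only [hR] using hμ.integral_comp (ℝ ∙ (v - w))ᗮ.reflection fun x ↦ inner ℝ x w ^ 2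

lemma finrank_mul_integral_sq_inner [FiniteDimensional ℝ E] (hμ : IsRotationInvariant μ)
    (hμ₂ : MemLp id 2 μ) (t : E) :
    Module.finrank ℝ E * ∫ x, inner ℝ x t ^ 2 ∂μ = ‖t‖ ^ 2 * ∫ x, ‖x‖ ^ 2 ∂μ := by
  let b := stdOrthonormalBasis ℝ E
  have hcoord (i) : ∫ x, inner ℝ x t ^ 2 ∂μ = ‖t‖ ^ 2 * ∫ x, inner ℝ x (b i) ^ 2 ∂μ := by
    rw [hμ.integral_sq_inner_congr_norm (w := ‖t‖ • b i) (by simp [norm_smul])]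
    simp only [real_inner_smul_right, mul_pow, integral_const_mul]
  have hint (i) : Integrable (fun x ↦ inner ℝ x (b i) ^ 2) μ :=
    (hμ₂.inner_const (b i)).integrable_sq
  calc (Module.finrank ℝ E : ℝ) * ∫ x, inner ℝ x t ^ 2 ∂μ
      = ∑ i, ‖t‖ ^ 2 * ∫ x, inner ℝ x (b i) ^ 2 ∂μ := by
        rw [← Finset.sum_congr rfl fun i _ ↦ hcoord i, Finset.sum_const, Finset.card_univ,
          Fintype.card_fin, nsmul_eq_mul]
    _ = ‖t‖ ^ 2 * ∫ x, ‖x‖ ^ 2 ∂μ := by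
        rw [← Finset.mul_sum, ← integral_finsetSum _ fun i _ ↦ hint i]
        simp only [b.sum_sq_inner_left]

end IsRotationInvariant
end RotationInvariance

section CentralLimitTheorem

lemma tendsto_charFun_inv_sqrt_mul_pow_of_memLp {Ω : Type*} {mΩ : MeasurableSpace Ω}
    {P : Measure Ω} [IsProbabilityMeasure P] {X : Ω → ℝ} (hX : MemLp X 2 P)
    (hmean : ∫ ω, X ω ∂P = 0) (t : ℝ) :
    Tendsto (fun n : ℕ ↦ charFun (P.map X) ((√n)⁻¹ * t) ^ n) atTop
      (𝓝 (Complex.exp (-((∫ ω, X ω ^ 2 ∂P) * t ^ 2) / 2))) := by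
  set v : ℝ := ∫ ω, X ω ^ 2 ∂P with hv
  have hv₀ : 0 ≤ v := integral_nonneg fun ω ↦ sq_nonneg (X ω)
  rcases hv₀.eq_or_lt with hv₀ | hv₀
  · have hX₀ : X =ᵐ[P] fun _ ↦ 0 := by
      filter_upwards [(integral_eq_zero_iff_of_nonneg (fun ω ↦ sq_nonneg (X ω))
        hX.integrable_sq).1 hv₀.symm] with ω hω
      exact pow_eq_zero_iff two_ne_zero |>.1 hω
    simp only [Measure.map_congr hX₀, Measure.map_const, measure_univ, one_smul, charFun_dirac,
      ← hv₀]
    simp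
  · have hvar : P[((√v)⁻¹ • X) ^ 2] = 1 := by
      simp only [Pi.pow_apply, Pi.smul_apply, smul_eq_mul, mul_pow, integral_const_mul, inv_pow,
        Real.sq_sqrt hv₀.le, ← hv]
      exact inv_mul_cancel₀ hv₀.ne'
    have hmean' : P[(√v)⁻¹ • X] = 0 := by
      simp only [Pi.smul_apply, smul_eq_mul, integral_const_mul, hmean, mul_zero]
    have hclt := tendsto_charFun_inv_sqrt_mul_pow (hX.aemeasurable.const_smul (√v)⁻¹) hmean' hvar
      (√v * t)
    have hlaw (n : ℕ) : charFun (P.map ((√v)⁻¹ • X)) ((√n)⁻¹ * (√v * t)) =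
        charFun (P.map X) ((√n)⁻¹ * t) := by
      rw [show (√v)⁻¹ • X = fun ω ↦ (√v)⁻¹ * X ω from rfl, charFun_map_mul_comp hX.aemeasurable]
      congr 1
      field_simp
    have hlimit : Complex.exp (-(√v * t : ℝ) ^ 2 / 2) = Complex.exp (-(v * t ^ 2) / 2) := by
      rw [← Complex.ofReal_pow, mul_pow, Real.sq_sqrt hv₀.le]
      push_cast
      rfl
    simpa only [hlaw, hlimit] using hclt

variable {E : Type*} [NormedAddCommGroup E] [InnerProductSpace ℝ E] [MeasurableSpace E]
  [BorelSpace E]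

lemma charFun_map_inner (μ : Measure E) (t : E) (s : ℝ) :
    charFun (μ.map fun x ↦ inner ℝ x t) s = charFun μ (s • t) := by
  rw [charFun_apply_real, charFun_apply, integral_map (by fun_prop) (by fun_prop)]
  simp only [real_inner_smul_right, Complex.ofReal_mul]

/-- The normalized sum `n^{-1/2} ∑ᵢ xᵢ` of `n` vectors; it is `0` for `n = 0`. -/
noncomputable def normalizedSum {E : Type*} [AddCommMonoid E] [SMul ℝ E] {n : ℕ}
    (x : Fin n → E) : E :=
  (√n)⁻¹ • ∑ i, x i

variable [SecondCountableTopology E]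

lemma measurable_normalizedSum (n : ℕ) : Measurable (normalizedSum : (Fin n → E) → E) := by
  unfold normalizedSum
  fun_prop

lemma charFun_map_normalizedSum [CompleteSpace E] (μ : Measure E) [IsProbabilityMeasure μ]
    (n : ℕ) (t : E) :
    charFun ((Measure.pi fun _ : Fin n ↦ μ).map normalizedSum) t = charFun μ ((√n)⁻¹ • t) ^ n := by
  have hsum : AEMeasurable (fun x : Fin n → E ↦ ∑ i, x i) (Measure.pi fun _ ↦ μ) := by fun_prop
  rw [show (normalizedSum : (Fin n → E) → E) = fun x ↦ (√n)⁻¹ • ∑ i, x i from rfl,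
    charFun_map_smul_comp hsum, charFun_map_sum_pi_eq_prod, Finset.prod_const, Finset.card_univ,
    Fintype.card_fin, Pi.pow_apply]

theorem tendstoInDistribution_normalizedSum [FiniteDimensional ℝ E] {μ : Measure E}
    [IsProbabilityMeasure μ] (hμ : MemLp id 2 μ) (hmean : ∀ t, ∫ x, inner ℝ x t ∂μ = 0) {c : ℝ}
    (hcov : ∀ t, ∫ x, inner ℝ x t ^ 2 ∂μ = (c * ‖t‖) ^ 2) :
    TendstoInDistribution (fun n ↦ (normalizedSum : (Fin n → E) → E)) atTop (fun x ↦ c • x)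
      (fun n ↦ Measure.pi fun _ : Fin n ↦ μ) (stdGaussian E) where
  forall_aemeasurable n := (measurable_normalizedSum n).aemeasurable
  tendsto := by
    refine ProbabilityMeasure.tendsto_iff_tendsto_charFun.2 fun t ↦ ?_
    simp only [ProbabilityMeasure.coe_mk, charFun_map_normalizedSum, charFun_map_smul,
      charFun_stdGaussian]
    have h := tendsto_charFun_inv_sqrt_mul_pow_of_memLp (hμ.inner_const t) (hmean t) 1
    simpa [charFun_map_inner, hcov, norm_smul, mul_pow, ← Complex.ofReal_pow] using h

end CentralLimitTheorem

section SubgaussianMoments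
open Real
open scoped NNReal

section Scalar

variable {Ω : Type*} {mΩ : MeasurableSpace Ω} {μ : Measure Ω} {X : Ω → ℝ} {c : ℝ≥0}

lemma integrable_abs_rpow_of_hasSubgaussianMGF (hX : HasSubgaussianMGF X c μ) {p : ℝ}
    (hp : 0 < p) : Integrable (fun ω ↦ |X ω| ^ p) μ := by
  have h := (hX.memLp p.toNNReal).integrable_norm_rpow (by simpa using hp) (by simp)
  simpa [hp.le] using h

lemma integral_abs_rpow_le_of_hasSubgaussianMGF (hX : HasSubgaussianMGF X c μ) {p : ℝ}
    (hp : 0 < p) : ∫ ω, |X ω| ^ p ∂μ ≤ p ^ p * (2 * exp (c / 2)) := by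
  have hexp₁ := hX.integrable_exp_mul 1
  have hexp₂ := hX.integrable_exp_mul (-1)
  have hmgf (s : ℝ) (hs : s ^ 2 = 1) : ∫ ω, exp (s * X ω) ∂μ ≤ exp (c / 2) := by
    simpa only [hs, mul_one, mgf] using hX.mgf_le s
  calc ∫ ω, |X ω| ^ p ∂μ
      ≤ ∫ ω, p ^ p * (exp (1 * X ω) + exp (-1 * X ω)) ∂μ := by
        refine integral_mono (integrable_abs_rpow_of_hasSubgaussianMGF hX hp)
          ((hexp₁.add hexp₂).const_mul _) fun ω ↦ ?_
        calc |X ω| ^ p ≤ (p / |1|) ^ p * max (exp (1 * X ω)) (exp (-1 * X ω)) :=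
              rpow_abs_le_mul_max_exp _ hp.le one_ne_zero
          _ ≤ p ^ p * (exp (1 * X ω) + exp (-1 * X ω)) := by
              rw [abs_one, div_one]
              gcongr
              exact max_le_add_of_nonneg (exp_nonneg _) (exp_nonneg _)
    _ = p ^ p * (∫ ω, exp (1 * X ω) ∂μ + ∫ ω, exp (-1 * X ω) ∂μ) := by
        rw [integral_const_mul, integral_add hexp₁ hexp₂]
    _ ≤ p ^ p * (2 * exp (c / 2)) := by
        rw [two_mul]
        gcongr
        exacts [hmgf 1 (by norm_num), hmgf (-1) (by norm_num)]

lemma hasSubgaussianMGF_normalizedSum [IsProbabilityMeasure μ] (hX : HasSubgaussianMGF X c μ)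
    {n : ℕ} (hn : n ≠ 0) :
    HasSubgaussianMGF (fun ω : Fin n → Ω ↦ normalizedSum fun i ↦ X (ω i)) c
      (Measure.pi fun _ ↦ μ) := by
  have hcoord (i : Fin n) :
      HasSubgaussianMGF (fun ω : Fin n → Ω ↦ X (ω i)) c (Measure.pi fun _ ↦ μ) := by
    have heval := measurePreserving_eval (fun _ : Fin n ↦ μ) i
    exact .of_map heval.aemeasurable (by rwa [heval.map_eq])
  have hsum := (HasSubgaussianMGF.sum_of_iIndepFun (s := Finset.univ)
    (iIndepFun_pi fun _ : Fin n ↦ hX.aemeasurable) fun i _ ↦ hcoord i).const_mul (√n)⁻¹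
  convert! hsum
  refine NNReal.eq ?_
  change (c : ℝ) = (√n)⁻¹ ^ 2 * ((∑ _ : Fin n, c : ℝ≥0) : ℝ)
  rw [inv_pow, sq_sqrt n.cast_nonneg, Finset.sum_const,
    Finset.card_univ, Fintype.card_fin, nsmul_eq_mul, NNReal.coe_mul, NNReal.coe_natCast,
    inv_mul_cancel_left₀ (Nat.cast_ne_zero.2 hn)]

end Scalar

section Vector

variable {E : Type*} [NormedAddCommGroup E] [InnerProductSpace ℝ E] {ι : Type*} [Fintype ι]
  (b : OrthonormalBasis ι ℝ E)

lemma norm_rpow_le_sum_abs_inner_rpow (x : E) {p : ℝ} (hp : 0 < p) :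
    ‖x‖ ^ p ≤ √(Fintype.card ι) ^ p * ∑ i, |inner ℝ (b i) x| ^ p := by
  have hsum : 0 ≤ ∑ i, |inner ℝ (b i) x| ^ p := by positivity
  have hsup : ⨆ i, ‖inner ℝ (b i) x‖ ≤ (∑ i, |inner ℝ (b i) x| ^ p) ^ p⁻¹ := by
    refine Real.iSup_le (fun i ↦ ?_) (by positivity)
    rw [norm_eq_abs, le_rpow_inv_iff_of_pos (abs_nonneg _) hsum hp]
    exact Finset.single_le_sum (f := fun i ↦ |inner ℝ (b i) x| ^ p) (fun _ _ ↦ by positivity)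
      (Finset.mem_univ i)
  calc ‖x‖ ^ p ≤ (√(Fintype.card ι) * (∑ i, |inner ℝ (b i) x| ^ p) ^ p⁻¹) ^ p := by
        gcongr
        exact (b.norm_le_card_mul_iSup_norm_inner x).trans (by gcongr)
    _ = √(Fintype.card ι) ^ p * ∑ i, |inner ℝ (b i) x| ^ p := by
        rw [mul_rpow (by positivity) (by positivity), rpow_inv_rpow hsum hp.ne']

variable {Ω : Type*} {mΩ : MeasurableSpace Ω} {μ : Measure Ω}
  {X : Ω → E} {c : ℝ≥0}

include b in
lemma integrable_norm_rpow_of_hasSubgaussianMGF_inner (hXm : AEStronglyMeasurable X μ)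
    (hX : ∀ i, HasSubgaussianMGF (fun ω ↦ inner ℝ (b i) (X ω)) c μ) {p : ℝ} (hp : 0 < p) :
    Integrable (fun ω ↦ ‖X ω‖ ^ p) μ := by
  have hdom : Integrable (fun ω ↦ √(Fintype.card ι) ^ p * ∑ i, |inner ℝ (b i) (X ω)| ^ p) μ :=
    (integrable_finsetSum _ fun i _ ↦
      integrable_abs_rpow_of_hasSubgaussianMGF (hX i) hp).const_mul _
  refine hdom.mono' (hXm.norm.aemeasurable.pow_const p).aestronglyMeasurable
    (.of_forall fun ω ↦ ?_)
  rw [norm_of_nonneg (by positivity)]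
  exact norm_rpow_le_sum_abs_inner_rpow b (X ω) hp

lemma integral_norm_rpow_le_of_hasSubgaussianMGF_inner (hXm : AEStronglyMeasurable X μ)
    (hX : ∀ i, HasSubgaussianMGF (fun ω ↦ inner ℝ (b i) (X ω)) c μ) {p : ℝ} (hp : 0 < p) :
    ∫ ω, ‖X ω‖ ^ p ∂μ ≤
      √(Fintype.card ι) ^ p * (Fintype.card ι * (p ^ p * (2 * exp (c / 2)))) := by
  have hint (i) := integrable_abs_rpow_of_hasSubgaussianMGF (hX i) hp
  calc ∫ ω, ‖X ω‖ ^ p ∂μ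
      ≤ ∫ ω, √(Fintype.card ι) ^ p * ∑ i, |inner ℝ (b i) (X ω)| ^ p ∂μ :=
        integral_mono (integrable_norm_rpow_of_hasSubgaussianMGF_inner b hXm hX hp)
          ((integrable_finsetSum _ fun i _ ↦ hint i).const_mul _)
          fun ω ↦ norm_rpow_le_sum_abs_inner_rpow b (X ω) hp
    _ = √(Fintype.card ι) ^ p * ∑ i, ∫ ω, |inner ℝ (b i) (X ω)| ^ p ∂μ := by
        rw [integral_const_mul, integral_finsetSum _ fun i _ ↦ hint i]
    _ ≤ √(Fintype.card ι) ^ p * (Fintype.card ι * (p ^ p * (2 * exp (c / 2)))) := by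
        gcongr
        rw [← nsmul_eq_mul, ← Finset.card_univ]
        exact Finset.sum_le_card_nsmul _ _ _ fun i _ ↦
          integral_abs_rpow_le_of_hasSubgaussianMGF (hX i) hp

end Vector
end SubgaussianMoments

section MomentsOfNormalizedSums
open Module Real
open scoped NNReal

lemma tendsto_integral_norm_rpow_of_hasSubgaussianMGF_inner {E ι κ : Type*}
    [NormedAddCommGroup E] [InnerProductSpace ℝ E] [MeasurableSpace E] [BorelSpace E]
    [SecondCountableTopology E] [Fintype ι] (b : OrthonormalBasis ι ℝ E) {l : Filter κ}
    {Ω : κ → Type*} {mΩ : ∀ j, MeasurableSpace (Ω j)} {μs : ∀ j, Measure (Ω j)}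
    [∀ j, IsProbabilityMeasure (μs j)] {X : ∀ j, Ω j → E} {Ω' : Type*} {mΩ' : MeasurableSpace Ω'}
    {μ : Measure Ω'} [IsProbabilityMeasure μ] {Z : Ω' → E} {c : ℝ≥0} {r : ℝ} (hr : 0 < r)
    (h : TendstoInDistribution X l Z μs μ)
    (hX : ∀ᶠ j in l, ∀ i, HasSubgaussianMGF (fun ω ↦ inner ℝ (b i) (X j ω)) c (μs j))
    (hZ : Integrable (fun ω ↦ ‖Z ω‖ ^ r) μ) :
    Tendsto (fun j ↦ ∫ ω, ‖X j ω‖ ^ r ∂μs j) l (𝓝 (∫ ω, ‖Z ω‖ ^ r ∂μ)) := by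
  have hsq (y : E) : (‖y‖ ^ r) ^ 2 = ‖y‖ ^ (r * 2) := by
    rw [rpow_mul (norm_nonneg y), rpow_two]
  have hXm (j : κ) : AEStronglyMeasurable (X j) (μs j) :=
    (h.forall_aemeasurable j).aestronglyMeasurable
  have hlim := h.continuous_comp (g := fun x ↦ ‖x‖ ^ r) (by fun_prop (disch := exact hr.le))
  refine tendsto_integral_of_tendstoInDistribution_of_integral_sq_le hlim ?_
    (C := √(Fintype.card ι) ^ (r * 2) *
      (Fintype.card ι * ((r * 2) ^ (r * 2) * (2 * exp (c / 2))))) (hX.mono fun j hj ↦ ?_) hZ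
  · filter_upwards [hX] with j hj
    refine (memLp_two_iff_integrable_sq (hlim.forall_aemeasurable j).aestronglyMeasurable).2 ?_
    simp only [Function.comp_apply, hsq]
    exact integrable_norm_rpow_of_hasSubgaussianMGF_inner b (hXm j) hj (by positivity)
  · simp only [hsq]
    exact integral_norm_rpow_le_of_hasSubgaussianMGF_inner b (hXm j) hj (by positivity)

lemma norm_sqrt_smul_rpow {E : Type*} [NormedAddCommGroup E] [NormedSpace ℝ E] {a r : ℝ}
    (ha : 0 ≤ a) (x : E) : ‖√a • x‖ ^ r = a ^ (r / 2) * ‖x‖ ^ r := by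
  rw [norm_smul, norm_of_nonneg (sqrt_nonneg a), mul_rpow (sqrt_nonneg a) (norm_nonneg x),
    sqrt_eq_rpow, ← rpow_mul ha, one_div_mul_eq_div]

lemma integral_norm_sqrt_smul_rpow_stdGaussian {E : Type*} [NormedAddCommGroup E]
    [InnerProductSpace ℝ E] [FiniteDimensional ℝ E] [Nontrivial E] [MeasurableSpace E]
    [BorelSpace E] {v r : ℝ} (hv : 0 ≤ v) (hr : -finrank ℝ E < r) :
    ∫ x, ‖√v • x‖ ^ r ∂stdGaussian E =
      (2 * v) ^ (r / 2) * (Gamma ((finrank ℝ E + r) / 2) / Gamma (finrank ℝ E / 2)) := by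
  simp only [norm_sqrt_smul_rpow hv, integral_const_mul, integral_norm_rpow_stdGaussian hr]
  rw [mul_rpow two_pos.le hv]
  ring

variable {E : Type*} [NormedAddCommGroup E] [InnerProductSpace ℝ E]

lemma inner_normalizedSum (t : E) {n : ℕ} (x : Fin n → E) :
    inner ℝ t (normalizedSum x) = normalizedSum fun i ↦ inner ℝ t (x i) := by
  simp only [normalizedSum, real_inner_smul_right, inner_sum, smul_eq_mul]

variable [MeasurableSpace E] [BorelSpace E] {μ : Measure E} [IsProbabilityMeasure μ] {R : ℝ}

lemma hasSubgaussianMGF_inner_of_norm_le {t : E} (hmean : ∫ x, inner ℝ t x ∂μ = 0)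
    (hR : ∀ᵐ x ∂μ, ‖x‖ ≤ R) :
    HasSubgaussianMGF (fun x ↦ inner ℝ t x) ((‖t‖₊ * ‖R‖₊) ^ 2) μ := by
  have hIcc : ∀ᵐ x ∂μ, inner ℝ t x ∈ Set.Icc (-(‖t‖ * R)) (‖t‖ * R) := by
    filter_upwards [hR] with x hx
    exact abs_le.1 ((abs_real_inner_le_norm t x).trans (by gcongr))
  convert! hasSubgaussianMGF_of_mem_Icc_of_integral_eq_zero
    (by fun_prop : Measurable fun x : E ↦ inner ℝ t x).aemeasurable hIcc hmean using 2
  rw [sub_neg_eq_add, ← two_mul, nnnorm_mul, nnnorm_mul, nnnorm_norm, Real.nnnorm_ofNat,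
    mul_div_cancel_left₀ _ two_ne_zero]

namespace IsRotationInvariant

lemma hasSubgaussianMGF_inner_normalizedSum (hμ : IsRotationInvariant μ)
    (hR : ∀ᵐ x ∂μ, ‖x‖ ≤ R) (t : E) {n : ℕ} (hn : n ≠ 0) :
    HasSubgaussianMGF (fun x : Fin n → E ↦ inner ℝ t (normalizedSum x)) ((‖t‖₊ * ‖R‖₊) ^ 2)
      (Measure.pi fun _ ↦ μ) := by
  have hmean : ∫ x, inner ℝ t x ∂μ = 0 := by
    simpa only [real_inner_comm] using hμ.integral_inner_eq_zero t
  simpa only [inner_normalizedSum] using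
    hasSubgaussianMGF_normalizedSum (hasSubgaussianMGF_inner_of_norm_le hmean hR) hn

variable [FiniteDimensional ℝ E] [Nontrivial E]

lemma tendstoInDistribution_normalizedSum (hμ : IsRotationInvariant μ)
    (hμ₂ : MemLp id 2 μ) :
    TendstoInDistribution (fun n ↦ (normalizedSum : (Fin n → E) → E)) atTop
      (fun x ↦ √((∫ y, ‖y‖ ^ 2 ∂μ) / finrank ℝ E) • x) (fun n ↦ Measure.pi fun _ : Fin n ↦ μ)
      (stdGaussian E) := by
  have hd : (finrank ℝ E : ℝ) ≠ 0 := Nat.cast_ne_zero.2 finrank_pos.ne'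
  refine _root_.tendstoInDistribution_normalizedSum hμ₂ hμ.integral_inner_eq_zero fun t ↦ ?_
  rw [mul_pow, sq_sqrt (by positivity), ← mul_right_inj' hd,
    hμ.finrank_mul_integral_sq_inner hμ₂ t]
  field_simp

theorem tendsto_integral_norm_normalizedSum_rpow (hμ : IsRotationInvariant μ)
    (hR : ∀ᵐ x ∂μ, ‖x‖ ≤ R) {r : ℝ} (hr : 0 < r) :
    Tendsto (fun n : ℕ ↦ ∫ x : Fin n → E, ‖normalizedSum x‖ ^ r ∂Measure.pi fun _ ↦ μ) atTop
      (𝓝 ((2 * ((∫ x, ‖x‖ ^ 2 ∂μ) / finrank ℝ E)) ^ (r / 2) *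
        (Gamma ((finrank ℝ E + r) / 2) / Gamma (finrank ℝ E / 2)))) := by
  have hv : 0 ≤ (∫ x, ‖x‖ ^ 2 ∂μ) / finrank ℝ E := by positivity
  have hclt := hμ.tendstoInDistribution_normalizedSum (.of_bound aestronglyMeasurable_id R hR)
  rw [← integral_norm_sqrt_smul_rpow_stdGaussian hv (by linarith)]
  refine tendsto_integral_norm_rpow_of_hasSubgaussianMGF_inner (stdOrthonormalBasis ℝ E) hr hclt
    (c := ‖R‖₊ ^ 2) ?_ ?_
  · filter_upwards [eventually_ne_atTop 0] with n hn i
    have hi : ‖stdOrthonormalBasis ℝ E i‖₊ = 1 := NNReal.eq (OrthonormalBasis.norm_eq_one _ i)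
    simpa only [hi, one_mul] using hμ.hasSubgaussianMGF_inner_normalizedSum hR
      (stdOrthonormalBasis ℝ E i) hn
  · simp only [norm_sqrt_smul_rpow hv]
    exact (integrable_norm_rpow_stdGaussian hr).const_mul _

end IsRotationInvariant
end MomentsOfNormalizedSums

section WeightedBergmanMeasure
open Module Real

lemma integral_mul_one_sub_sq_rpow {s : ℝ} (hs : 0 < s) :
    ∫ y in (0 : ℝ)..1, y * (1 - y ^ 2) ^ (s - 1) = 1 / (2 * s) := by
  have hderiv (y : ℝ) (hy : y ∈ Set.Ioo 0 1) :
      HasDerivAt (fun y : ℝ ↦ -((1 - y ^ 2) ^ s / (2 * s))) (y * (1 - y ^ 2) ^ (s - 1)) y := by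
    have hy' : 1 - y ^ 2 ≠ 0 := by nlinarith [hy.1, hy.2]
    convert! ((((hasDerivAt_pow 2 y).const_sub 1).rpow_const (p := s) (.inl hy')).div_const
      (2 * s)).neg using 1
    field_simp
    ring
  have hcont : ContinuousOn (fun y : ℝ ↦ -((1 - y ^ 2) ^ s / (2 * s))) (Set.Icc 0 1) := by
    fun_prop (disch := exact hs.le)
  have hnonneg (y : ℝ) (hy : y ∈ Set.Ioo 0 1) : 0 ≤ y * (1 - y ^ 2) ^ (s - 1) :=
    mul_nonneg hy.1.le (rpow_nonneg (by nlinarith [hy.1, hy.2]) _)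
  rw [intervalIntegral.integral_eq_sub_of_hasDerivAt_of_le zero_le_one hcont hderiv
    ((intervalIntegrable_iff_integrableOn_Ioc_of_le zero_le_one).2
      (intervalIntegral.integrableOn_deriv_of_nonneg hcont hderiv hnonneg))]
  simp [zero_rpow hs.ne']

lemma setIntegral_ball_fun_norm_addHaar {E F : Type*} [NormedAddCommGroup E] [NormedSpace ℝ E]
    [FiniteDimensional ℝ E] [Nontrivial E] [MeasurableSpace E] [BorelSpace E]
    [NormedAddCommGroup F] [NormedSpace ℝ F] (μ : Measure E) [μ.IsAddHaarMeasure] (r : ℝ)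
    (f : ℝ → F) :
    ∫ x in ball 0 r, f ‖x‖ ∂μ =
      finrank ℝ E • μ.real (ball 0 1) • ∫ y in Set.Ioo 0 r, y ^ (finrank ℝ E - 1) • f y := by
  have hball : (ball (0 : E) r).indicator (fun x ↦ f ‖x‖) =
      fun x ↦ (Set.Iio r).indicator f ‖x‖ := by
    classical
    ext x
    simp only [Set.indicator_apply, mem_ball_zero_iff, Set.mem_Iio]
  rw [← integral_indicator measurableSet_ball, hball, integral_fun_norm_addHaar,
    ← Set.Ioi_inter_Iio, ← setIntegral_indicator measurableSet_Iio]
  simp only [Set.indicator_smul_apply]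

lemma setIntegral_ball_one_sub_norm_sq_rpow {s : ℝ} (hs : 0 < s) :
    ∫ z in ball (0 : ℂ) 1, (1 - ‖z‖ ^ 2) ^ (s - 1) = π / s := by
  have hvol : volume.real (ball (0 : ℂ) 1) = π := by
    simp [Measure.real, Complex.volume_ball]
  have h := integral_mul_one_sub_sq_rpow hs
  rw [intervalIntegral.integral_of_le zero_le_one, integral_Ioc_eq_integral_Ioo] at h
  rw [setIntegral_ball_fun_norm_addHaar volume 1 fun y ↦ (1 - y ^ 2) ^ (s - 1), hvol,
    Complex.finrank_real_complex]
  simp only [smul_eq_mul, nsmul_eq_mul, Nat.add_one_sub_one, pow_one, h]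
  push_cast
  field_simp

lemma integral_bergmanMeasure {E : Type*} [NormedAddCommGroup E] [NormedSpace ℝ E] {α : ℝ}
    (hα : 1 ≤ α) (f : ℂ → E) :
    ∫ z, f z ∂bergmanMeasure α =
      ∫ z in ball 0 1, ((α - 1) * (1 - ‖z‖ ^ 2) ^ (α - 2) / π) • f z := by
  rw [bergmanMeasure, integral_withDensity_eq_integral_toReal_smul (by fun_prop) (by simp)]
  refine setIntegral_congr_fun measurableSet_ball fun z hz ↦ ?_
  have hz' : 0 ≤ 1 - ‖z‖ ^ 2 := by nlinarith [mem_ball_zero_iff.1 hz, norm_nonneg z]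
  have : 0 ≤ α - 1 := sub_nonneg.2 hα
  simp only [ENNReal.toReal_ofReal
    (show 0 ≤ (α - 1) * (1 - ‖z‖ ^ 2) ^ (α - 2) / π by positivity)]

lemma integral_one_sub_norm_sq_rpow_bergmanMeasure {α s : ℝ} (hα : 1 ≤ α) (hs : 0 < α - 1 + s) :
    ∫ z, (1 - ‖z‖ ^ 2) ^ s ∂bergmanMeasure α = (α - 1) / (α - 1 + s) := by
  calc ∫ z, (1 - ‖z‖ ^ 2) ^ s ∂bergmanMeasure α
      = ∫ z in ball (0 : ℂ) 1, (α - 1) / π * (1 - ‖z‖ ^ 2) ^ (α - 1 + s - 1) := by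
        rw [integral_bergmanMeasure hα]
        refine setIntegral_congr_fun measurableSet_ball fun z hz ↦ ?_
        have hz' : 0 < 1 - ‖z‖ ^ 2 := by nlinarith [mem_ball_zero_iff.1 hz, norm_nonneg z]
        simp only [smul_eq_mul]
        rw [show α - 1 + s - 1 = α - 2 + s by ring, rpow_add hz']
        ring
    _ = (α - 1) / (α - 1 + s) := by
        rw [integral_const_mul, setIntegral_ball_one_sub_norm_sq_rpow hs]
        field_simp

lemma isProbabilityMeasure_bergmanMeasure {α : ℝ} (hα : 1 < α) :
    IsProbabilityMeasure (bergmanMeasure α) := by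
  have h := integral_one_sub_norm_sq_rpow_bergmanMeasure (s := 0) hα.le (by linarith)
  simp only [rpow_zero, integral_const, smul_eq_mul, mul_one, add_zero,
    div_self (sub_pos.2 hα).ne'] at h
  exact ⟨(ENNReal.toReal_eq_one_iff _).1 h⟩

lemma ae_norm_lt_one_bergmanMeasure (α : ℝ) : ∀ᵐ z ∂bergmanMeasure α, ‖z‖ < 1 := by
  refine (withDensity_absolutelyContinuous _ _).ae_le ?_
  filter_upwards [ae_restrict_mem measurableSet_ball] with z hz using mem_ball_zero_iff.1 hz

lemma integral_norm_sq_bergmanMeasure {α : ℝ} (hα : 1 < α) :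
    ∫ z, ‖z‖ ^ 2 ∂bergmanMeasure α = 1 / α := by
  have := isProbabilityMeasure_bergmanMeasure hα
  have h := integral_one_sub_norm_sq_rpow_bergmanMeasure (s := 1) hα.le (by linarith)
  have hint : Integrable (fun z ↦ ‖z‖ ^ 2) (bergmanMeasure α) := by
    refine .of_bound (by fun_prop) 1 ?_
    filter_upwards [ae_norm_lt_one_bergmanMeasure α] with z hz
    rw [norm_pow, norm_norm]
    exact pow_le_one₀ (norm_nonneg z) hz.le
  simp only [rpow_one, sub_add_cancel] at h
  rw [integral_sub (integrable_const 1) hint, integral_const, probReal_univ, one_smul] at h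
  have hα₀ : α ≠ 0 := by positivity
  rw [sub_div, div_self hα₀] at h
  linarith

lemma isRotationInvariant_bergmanMeasure (α : ℝ) : IsRotationInvariant (bergmanMeasure α) :=
  (isRotationInvariant_volume.restrict_ball 1).withDensity_norm
    (f := fun y ↦ ENNReal.ofReal ((α - 1) * (1 - y ^ 2) ^ (α - 2) / π)) (by fun_prop)

theorem tendsto_integral_norm_normalizedSum_rpow_bergmanMeasurePi {α r : ℝ} (hα : 1 < α)
    (hr : 0 < r) :
    Tendsto (fun n ↦ ∫ z, ‖normalizedSum z‖ ^ r ∂bergmanMeasurePi n α) atTop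
      (𝓝 (α⁻¹ ^ (r / 2) * Gamma (r / 2 + 1))) := by
  have := isProbabilityMeasure_bergmanMeasure hα
  have h := (isRotationInvariant_bergmanMeasure α).tendsto_integral_norm_normalizedSum_rpow
    ((ae_norm_lt_one_bergmanMeasure α).mono fun _ ↦ le_of_lt) hr
  rw [integral_norm_sq_bergmanMeasure hα, Complex.finrank_real_complex, Nat.cast_ofNat,
    mul_div_cancel₀ _ two_ne_zero, div_self two_ne_zero, Gamma_one, div_one, one_div, add_comm,
    add_div, div_self two_ne_zero] at h
  exact h

end WeightedBergmanMeasure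

section NormRatio

lemma inv_sqrt_mul_sum_eq_normalizedSum {n : ℕ} (z : Fin n → ℂ) :
    ((Real.sqrt n)⁻¹ : ℂ) * ∑ i, z i = normalizedSum z := by
  rw [normalizedSum, Complex.real_smul, Complex.ofReal_inv]

lemma tendsto_bergmanNorm_inv_sqrt_mul_sum {s r α : ℝ} (hs : 0 < s) (hr : 0 < r) (hα : 1 < α) :
    Tendsto (fun n : ℕ ↦ (∫ z : Fin n → ℂ, ‖((Real.sqrt n)⁻¹ : ℂ) * ∑ i, z i‖ ^ (s * r)
      ∂bergmanMeasurePi n α) ^ (1 / r)) atTop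
      (𝓝 ((√α)⁻¹ ^ s * Real.Gamma (r * s / 2 + 1) ^ (1 / r))) := by
  have hlim : (√α)⁻¹ ^ s * Real.Gamma (r * s / 2 + 1) ^ (1 / r) =
      (α⁻¹ ^ (s * r / 2) * Real.Gamma (s * r / 2 + 1)) ^ (1 / r) := by
    have hΓ : 0 < Real.Gamma (r * s / 2 + 1) := Real.Gamma_pos_of_pos (by positivity)
    have hexp : s * r / 2 * (1 / r) = 1 / 2 * s := by field_simp
    rw [mul_comm s r, Real.mul_rpow (by positivity) hΓ.le, ← Real.rpow_mul (by positivity),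
      mul_comm r s, hexp, Real.rpow_mul (by positivity), ← Real.sqrt_eq_rpow, Real.sqrt_inv]
  simp only [hlim, inv_sqrt_mul_sum_eq_normalizedSum]
  exact (tendsto_integral_norm_normalizedSum_rpow_bergmanMeasurePi hα
    (mul_pos hs hr)).rpow_const (.inr (by positivity))

theorem norm_ratio_limit_general {s p q α β : ℝ} (hs : 0 < s) (hp : 0 < p) (hq : 0 < q)
    (hα : 1 < α) (hβ : 1 < β) :
    Tendsto
      (fun n : ℕ ↦
        (∫ z : Fin n → ℂ, ‖((Real.sqrt n)⁻¹ : ℂ) * ∑ i, z i‖ ^ (s * q)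
          ∂bergmanMeasurePi n β) ^ (1 / q) /
        (∫ z : Fin n → ℂ, ‖((Real.sqrt n)⁻¹ : ℂ) * ∑ i, z i‖ ^ (s * p)
          ∂bergmanMeasurePi n α) ^ (1 / p))
      atTop
      (𝓝 (√(α / β) ^ s *
        (Real.Gamma (q * s / 2 + 1) ^ (1 / q) / Real.Gamma (p * s / 2 + 1) ^ (1 / p)))) := by
  have : 0 < Real.Gamma (p * s / 2 + 1) := Real.Gamma_pos_of_pos (by positivity)
  have hlim : √(α / β) ^ s *
      (Real.Gamma (q * s / 2 + 1) ^ (1 / q) / Real.Gamma (p * s / 2 + 1) ^ (1 / p)) =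
      (√β)⁻¹ ^ s * Real.Gamma (q * s / 2 + 1) ^ (1 / q) /
        ((√α)⁻¹ ^ s * Real.Gamma (p * s / 2 + 1) ^ (1 / p)) := by
    rw [Real.sqrt_div' _ (by positivity), Real.div_rpow (by positivity) (by positivity),
      Real.inv_rpow (by positivity), Real.inv_rpow (by positivity)]
    field_simp
  rw [hlim]
  exact (tendsto_bergmanNorm_inv_sqrt_mul_sum hs hq hβ).div
    (tendsto_bergmanNorm_inv_sqrt_mul_sum hs hp hα) (by positivity)

end NormRatio

/-- The limiting ratio of the Bergman norms of powers of `p_{1,n}(𝐳) = n^{-1/2} ∑ᵢ zᵢ`: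
`lim_{n→∞} ‖p_{1,n}^m‖_{A_β^q(𝔻ⁿ)} / ‖p_{1,n}^m‖_{A_α^p(𝔻ⁿ)}
  = (√(α/β))^m · Γ(qm/2+1)^{1/q} / Γ(pm/2+1)^{1/p}`. -/
theorem norm_ratio_limit
    (m : ℕ) (hm : 0 < m) (p q α β : ℝ) (hp : 0 < p) (hq : 0 < q)
    (hα : 1 < α) (hβ : 1 < β) :
    Tendsto
      (fun n : ℕ =>
        ((∫ z : Fin n → ℂ,
            ‖((Real.sqrt n)⁻¹ : ℂ) * ∑ i, z i‖ ^ ((m : ℝ) * q)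
          ∂(bergmanMeasurePi n β)) ^ (1 / q)) /
        ((∫ z : Fin n → ℂ,
            ‖((Real.sqrt n)⁻¹ : ℂ) * ∑ i, z i‖ ^ ((m : ℝ) * p)
          ∂(bergmanMeasurePi n α)) ^ (1 / p)))
      atTop
      (nhds (Real.sqrt (α / β) ^ m *
        (Real.Gamma (q * m / 2 + 1) ^ (1 / q) / Real.Gamma (p * m / 2 + 1) ^ (1 / p)))) := by
  simpa only [Real.rpow_natCast] using
    norm_ratio_limit_general (Nat.cast_pos.2 hm) hp hq hα hβ
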